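/- Let α, β be real numbers with α > -1/2 and β > -1/2, let δ > 0 be real, let n ∈ ℕ (n ≥ 0), and let t ∈ (0, π]. Then F_n^{(α,β+1),δ}(t) = A_n^{α,β} F_n^{(α,β),δ}(t) + B_n^{α,β} F_{n+1}^{(α,β),δ}(t), where A_n^{α,β} = (n + β + 1/2)/(2n + α + β + 1) and B_n^{α,β} = (n + 1)/(2n + α + β + 1). -/

import Mathlib

open MeasureTheory Real Set

/-- Generalized binomial coefficient `C(u, v) = Γ(u+1) / (Γ(v+1) Γ(u-v+1))`. -/
noncomputable def genBinom (u v : ℝ) : ℝ :=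
  Real.Gamma (u + 1) / (Real.Gamma (v + 1) * Real.Gamma (u - v + 1))

/-- Jacobi polynomial `P_n^{(a,b)}(x)`. -/
noncomputable def jacobiP (n : ℕ) (a b x : ℝ) : ℝ :=
  ∑ k ∈ Finset.range (n + 1),
    genBinom ((n : ℝ) + a) ((n : ℝ) - (k : ℝ)) * genBinom ((n : ℝ) + b) (k : ℝ) *
      ((x - 1) / 2) ^ k * ((x + 1) / 2) ^ (n - k)

/-- `F_n^{(α,β),δ}(t)`. -/
noncomputable def FJ (n : ℕ) (α β δ t : ℝ) : ℝ :=
  ∫ θ in (0:ℝ)..t, (t - θ) ^ δ * jacobiP n (α - 1/2) (β - 1/2) (Real.cos θ) *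
    (Real.sin (θ / 2)) ^ (2 * α) * (Real.cos (θ / 2)) ^ (2 * β)

/-!
The recurrence holds for the integrands. Since `cos (θ / 2) ^ 2 = (1 + cos θ) / 2`, raising `β` by
one multiplies the weight by `(1 + x) / 2` with `x = cos θ`, and the contiguous relation
`(2n + a + b + 2) ((1 + x) / 2) P_n^{(a,b+1)} = (n + b + 1) P_n^{(a,b)} + (n + 1) P_{n+1}^{(a,b)}`
expands the product. To prove that relation, write `u = (x - 1) / 2` and `v = (x + 1) / 2`, multiply
the first term on the right by `v - u = 1`, and compare coefficients of the homogeneous polynomials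
in `u` and `v`.
-/

/-- At the poles `s = 0, -1, -2, …` this relies on `Real.Gamma` being `0` there, which makes
`(Real.Gamma s)⁻¹` the entire function `1 / Γ`. -/
lemma inv_Gamma_eq_mul_inv_Gamma_add_one (s : ℝ) : (Gamma s)⁻¹ = s * (Gamma (s + 1))⁻¹ := by
  rcases eq_or_ne s 0 with rfl | hs
  · simp
  · rw [Gamma_add_one hs]
    field_simp

lemma add_one_mul_genBinom_eq {u : ℝ} (hu : u + 1 ≠ 0) (v : ℝ) :
    (u + 1) * genBinom u v = genBinom (u + 1) (v + 1) * (v + 1) := by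
  simp only [genBinom, div_eq_mul_inv, mul_inv]
  rw [Gamma_add_one hu, inv_Gamma_eq_mul_inv_Gamma_add_one (v + 1), add_sub_add_right_eq_sub]
  ring

lemma genBinom_mul_add_one_eq {u : ℝ} (hu : u + 1 ≠ 0) (v : ℝ) :
    genBinom u v * (u + 1) = genBinom (u + 1) v * (u + 1 - v) := by
  simp only [genBinom, div_eq_mul_inv, mul_inv]
  rw [Gamma_add_one hu, inv_Gamma_eq_mul_inv_Gamma_add_one (u - v + 1), sub_add_eq_add_sub]
  ring

lemma genBinom_neg_one_right (u : ℝ) : genBinom u (-1) = 0 := by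
  simp [genBinom]

/-- The coefficient of `((x - 1) / 2) ^ k * ((x + 1) / 2) ^ (n - k)` in `jacobiP n a b x`. The
degree and the index are real numbers, so that `k - 1` and `n + 1` need no casts and the contiguous
relation between coefficients needs no separate treatment of `k = 0` and `k = n + 1`. -/
noncomputable def jacobiCoeff (n a b k : ℝ) : ℝ :=
  genBinom (n + a) (n - k) * genBinom (n + b) k

lemma jacobiCoeff_neg_one (n a b : ℝ) : jacobiCoeff n a b (-1) = 0 := by
  rw [jacobiCoeff, genBinom_neg_one_right, mul_zero]

lemma jacobiCoeff_add_one_self (n a b : ℝ) : jacobiCoeff n a b (n + 1) = 0 := by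
  rw [jacobiCoeff, sub_add_cancel_left, genBinom_neg_one_right, zero_mul]

lemma jacobiCoeff_contiguous {n a b : ℝ} (ha : n + a + 1 ≠ 0) (hb : n + b + 1 ≠ 0) (k : ℝ) :
    (2 * n + a + b + 2) * jacobiCoeff n a (b + 1) k =
      (n + b + 1) * (jacobiCoeff n a b k - jacobiCoeff n a b (k - 1)) +
        (n + 1) * jacobiCoeff (n + 1) a b k := by
  have hleft := add_one_mul_genBinom_eq ha (n - k)
  have hleft_pred := genBinom_mul_add_one_eq ha (n - k + 1)
  have hright := genBinom_mul_add_one_eq hb k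
  have hright_pred := add_one_mul_genBinom_eq hb (k - 1)
  rw [sub_add_cancel] at hright_pred
  simp only [jacobiCoeff, ← add_assoc, add_right_comm n 1, show n - (k - 1) = n - k + 1 by ring,
    show n + 1 - k = n - k + 1 by ring]
  rw [eq_div_of_mul_eq ha ((mul_comm _ _).trans hleft), eq_div_of_mul_eq ha hleft_pred,
    eq_div_of_mul_eq hb hright, eq_div_of_mul_eq hb ((mul_comm _ _).trans hright_pred)]
  field_simp
  ring

section HomogeneousSum

variable {R : Type*} [CommSemiring R]

lemma mul_sum_range_mul_pow_mul_pow_sub {n : ℕ} {f : ℕ → R} (hf : f (n + 1) = 0) (u v : R) :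
    v * ∑ k ∈ Finset.range (n + 1), f k * u ^ k * v ^ (n - k) =
      ∑ k ∈ Finset.range (n + 2), f k * u ^ k * v ^ (n + 1 - k) := by
  rw [Finset.sum_range_succ _ (n + 1), hf, zero_mul, zero_mul, add_zero, Finset.mul_sum]
  refine Finset.sum_congr rfl fun k hk ↦ ?_
  rw [Nat.sub_add_comm (Finset.mem_range_succ_iff.mp hk)]
  ring

lemma mul_sum_range_succ_mul_pow_mul_pow_sub {f : ℕ → R} (hf : f 0 = 0) (n : ℕ) (u v : R) :
    u * ∑ k ∈ Finset.range (n + 1), f (k + 1) * u ^ k * v ^ (n - k) =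
      ∑ k ∈ Finset.range (n + 2), f k * u ^ k * v ^ (n + 1 - k) := by
  rw [Finset.sum_range_succ' _ (n + 1), hf, zero_mul, zero_mul, add_zero, Finset.mul_sum]
  refine Finset.sum_congr rfl fun k _ ↦ ?_
  rw [Nat.add_sub_add_right]
  ring

end HomogeneousSum

lemma jacobiP_eq_sum_jacobiCoeff (n : ℕ) (a b x : ℝ) :
    jacobiP n a b x = ∑ k ∈ Finset.range (n + 1),
      jacobiCoeff n a b k * ((x - 1) / 2) ^ k * ((x + 1) / 2) ^ (n - k) :=
  rfl

lemma add_one_div_two_mul_jacobiP (n : ℕ) (a b x : ℝ) :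
    (x + 1) / 2 * jacobiP n a b x = ∑ k ∈ Finset.range (n + 2),
      jacobiCoeff n a b k * ((x - 1) / 2) ^ k * ((x + 1) / 2) ^ (n + 1 - k) :=
  mul_sum_range_mul_pow_mul_pow_sub (f := fun k ↦ jacobiCoeff n a b k)
    (by rw [Nat.cast_succ, jacobiCoeff_add_one_self]) _ _

lemma sub_one_div_two_mul_jacobiP (n : ℕ) (a b x : ℝ) :
    (x - 1) / 2 * jacobiP n a b x = ∑ k ∈ Finset.range (n + 2),
      jacobiCoeff n a b (k - 1) * ((x - 1) / 2) ^ k * ((x + 1) / 2) ^ (n + 1 - k) := by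
  rw [← mul_sum_range_succ_mul_pow_mul_pow_sub (f := fun k ↦ jacobiCoeff n a b (k - 1))
    (by rw [Nat.cast_zero, zero_sub, jacobiCoeff_neg_one])]
  simp only [Nat.cast_succ, add_sub_cancel_right, jacobiP_eq_sum_jacobiCoeff]

lemma jacobiP_contiguous {n : ℕ} {a b : ℝ} (ha : n + a + 1 ≠ 0) (hb : n + b + 1 ≠ 0) (x : ℝ) :
    (2 * n + a + b + 2) * ((x + 1) / 2 * jacobiP n a (b + 1) x) =
      (n + b + 1) * jacobiP n a b x + (n + 1) * jacobiP (n + 1) a b x := by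
  have hsplit : jacobiP n a b x =
      (x + 1) / 2 * jacobiP n a b x - (x - 1) / 2 * jacobiP n a b x := by ring
  rw [hsplit, add_one_div_two_mul_jacobiP, add_one_div_two_mul_jacobiP,
    sub_one_div_two_mul_jacobiP, jacobiP_eq_sum_jacobiCoeff (n + 1), ← Finset.sum_sub_distrib]
  simp only [Finset.mul_sum, ← Finset.sum_add_distrib]
  refine Finset.sum_congr rfl fun k _ ↦ ?_
  rw [Nat.cast_succ]
  linear_combination
    ((x - 1) / 2) ^ k * ((x + 1) / 2) ^ (n + 1 - k) * jacobiCoeff_contiguous ha hb k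

lemma continuous_jacobiP (n : ℕ) (a b : ℝ) : Continuous (jacobiP n a b) := by
  unfold jacobiP
  fun_prop

lemma sinc_pos {x : ℝ} (hx : x ∈ Ico 0 π) : 0 < sinc x := by
  rcases hx.1.eq_or_lt with rfl | hx0
  · simp
  · rw [sinc_of_ne_zero hx0.ne']
    exact div_pos (sin_pos_of_pos_of_lt_pi hx0 hx.2) hx0

lemma sin_eq_mul_sinc (x : ℝ) : sin x = x * sinc x := by
  rcases eq_or_ne x 0 with rfl | hx
  · simp
  · rw [sinc_of_ne_zero hx, mul_div_cancel₀ _ hx]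

lemma intervalIntegrable_sin_rpow_mul_cos_rpow_of_lt {c : ℝ} (hc : -1 < c) (d : ℝ) {b : ℝ}
    (hb : b ∈ Ico 0 (π / 2)) :
    IntervalIntegrable (fun x ↦ sin x ^ c * cos x ^ d) volume 0 b := by
  have hIcc : ∀ x ∈ uIcc 0 b, 0 ≤ x ∧ x < π / 2 := fun x hx ↦ by
    rw [uIcc_of_le hb.1] at hx
    exact ⟨hx.1, hx.2.trans_lt hb.2⟩
  have hsinc : ∀ x ∈ uIcc 0 b, 0 < sinc x := fun x hx ↦
    sinc_pos ⟨(hIcc x hx).1, (hIcc x hx).2.trans (half_lt_self pi_pos)⟩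
  have hcos : ∀ x ∈ uIcc 0 b, 0 < cos x := fun x hx ↦
    cos_pos_of_mem_Ioo ⟨by linarith [hIcc x hx, pi_pos], (hIcc x hx).2⟩
  have hcont : ContinuousOn (fun x ↦ sinc x ^ c * cos x ^ d) (uIcc 0 b) :=
    (continuous_sinc.continuousOn.rpow_const fun x hx ↦ .inl (hsinc x hx).ne').mul
      (continuous_cos.continuousOn.rpow_const fun x hx ↦ .inl (hcos x hx).ne')
  refine ((intervalIntegral.intervalIntegrable_rpow' hc).mul_continuousOn hcont).congr
    fun x hx ↦ ?_
  have hx' := uIoc_subset_uIcc hx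
  rw [sin_eq_mul_sinc, mul_rpow (hIcc x hx').1 (hsinc x hx').le, mul_assoc]

lemma intervalIntegrable_sin_rpow_mul_cos_rpow {c d : ℝ} (hc : -1 < c) (hd : -1 < d) :
    IntervalIntegrable (fun x ↦ sin x ^ c * cos x ^ d) volume 0 (π / 2) := by
  have hmid : π / 4 ∈ Ico 0 (π / 2) := ⟨by positivity, by linarith [pi_pos]⟩
  have hright := (intervalIntegrable_sin_rpow_mul_cos_rpow_of_lt hd c hmid).comp_sub_left (π / 2)
  simp only [sin_pi_div_two_sub, cos_pi_div_two_sub, mul_comm (cos _ ^ d), sub_zero,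
    show π / 2 - π / 4 = π / 4 by ring] at hright
  exact (intervalIntegrable_sin_rpow_mul_cos_rpow_of_lt hc d hmid).trans hright.symm

lemma intervalIntegrable_sin_half_rpow_mul_cos_half_rpow {c d : ℝ} (hc : -1 < c) (hd : -1 < d) :
    IntervalIntegrable (fun θ ↦ sin (θ / 2) ^ c * cos (θ / 2) ^ d) volume 0 π := by
  have h := (intervalIntegrable_sin_rpow_mul_cos_rpow hc hd).comp_mul_right (c := 2⁻¹)
  simpa only [← div_eq_mul_inv, div_inv_eq_mul, zero_mul, div_mul_cancel₀ π two_ne_zero] using h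

lemma cos_half_rpow_two_mul_add_one {β θ : ℝ} (hβ : β + 1 ≠ 0) :
    cos (θ / 2) ^ (2 * (β + 1)) = cos (θ / 2) ^ (2 * β) * ((cos θ + 1) / 2) := by
  have hsq : (cos θ + 1) / 2 = cos (θ / 2) ^ 2 := by
    rw [cos_sq, mul_div_cancel₀ θ two_ne_zero]
    ring
  rw [hsq, mul_add_one]
  rcases eq_or_ne (cos (θ / 2)) 0 with h | h
  · rw [h, zero_pow two_ne_zero, mul_zero, zero_rpow (by contrapose! hβ; linarith)]
  · exact_mod_cast rpow_add_natCast h (2 * β) 2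

lemma intervalIntegrable_sub_rpow_mul_sin_half_rpow_mul_cos_half_rpow {c d δ t : ℝ}
    (hc : -1 < c) (hd : -1 < d) (hδ : 0 ≤ δ) (ht : t ∈ Icc 0 π) :
    IntervalIntegrable (fun θ ↦ (t - θ) ^ δ * (sin (θ / 2) ^ c * cos (θ / 2) ^ d))
      volume 0 t := by
  have hkernel : Continuous fun θ ↦ (t - θ) ^ δ :=
    (continuous_const.sub continuous_id).rpow_const fun _ ↦ .inr hδ
  refine IntervalIntegrable.continuousOn_mul ?_ hkernel.continuousOn
  refine (intervalIntegrable_sin_half_rpow_mul_cos_half_rpow hc hd).mono_set ?_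
  exact uIcc_subset_uIcc_left (by rwa [uIcc_of_le pi_pos.le])

theorem FJ_beta_recurrence_general {α β : ℝ} (hα : -1 / 2 < α) (hβ : -1 / 2 < β) (n : ℕ)
    {K : ℝ → ℝ} {s t : ℝ}
    (hK : IntervalIntegrable (fun θ ↦ K θ * (sin (θ / 2) ^ (2 * α) * cos (θ / 2) ^ (2 * β)))
      volume s t) :
    (∫ θ in s..t, K θ * jacobiP n (α - 1 / 2) (β + 1 - 1 / 2) (cos θ) *
        sin (θ / 2) ^ (2 * α) * cos (θ / 2) ^ (2 * (β + 1))) =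
      (n + β + 1 / 2) / (2 * n + α + β + 1) *
        (∫ θ in s..t, K θ * jacobiP n (α - 1 / 2) (β - 1 / 2) (cos θ) *
          sin (θ / 2) ^ (2 * α) * cos (θ / 2) ^ (2 * β)) +
      (n + 1) / (2 * n + α + β + 1) *
        (∫ θ in s..t, K θ * jacobiP (n + 1) (α - 1 / 2) (β - 1 / 2) (cos θ) *
          sin (θ / 2) ^ (2 * α) * cos (θ / 2) ^ (2 * β)) := by
  have : (0 : ℝ) ≤ n := n.cast_nonneg
  have hD : 2 * n + α + β + 1 ≠ 0 := by linarith
  have hint (m : ℕ) : IntervalIntegrable (fun θ ↦ K θ * jacobiP m (α - 1 / 2) (β - 1 / 2) (cos θ) *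
      sin (θ / 2) ^ (2 * α) * cos (θ / 2) ^ (2 * β)) volume s t := by
    have hP := (continuous_jacobiP m (α - 1 / 2) (β - 1 / 2)).comp continuous_cos
    convert hK.mul_continuousOn hP.continuousOn using 2 with θ
    simp only [Function.comp_apply]
    ring
  rw [← intervalIntegral.integral_const_mul, ← intervalIntegral.integral_const_mul,
    ← intervalIntegral.integral_add ((hint n).const_mul _) ((hint (n + 1)).const_mul _)]
  refine intervalIntegral.integral_congr fun θ _ ↦ ?_
  have hcontig := jacobiP_contiguous (n := n) (a := α - 1 / 2) (b := β - 1 / 2)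
    (by linarith) (by linarith) (cos θ)
  have hP : (cos θ + 1) / 2 * jacobiP n (α - 1 / 2) (β + 1 - 1 / 2) (cos θ) =
      (n + β + 1 / 2) / (2 * n + α + β + 1) * jacobiP n (α - 1 / 2) (β - 1 / 2) (cos θ) +
        (n + 1) / (2 * n + α + β + 1) * jacobiP (n + 1) (α - 1 / 2) (β - 1 / 2) (cos θ) := by
    simp only [div_mul_eq_mul_div _ (2 * n + α + β + 1)]
    rw [← add_div, eq_div_iff hD, add_sub_right_comm]
    linear_combination hcontig
  simp only [cos_half_rpow_two_mul_add_one (show β + 1 ≠ 0 by linarith)]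
  linear_combination K θ * sin (θ / 2) ^ (2 * α) * cos (θ / 2) ^ (2 * β) * hP

theorem FJ_beta_recurrence (α β : ℝ) (hα : -1/2 < α) (hβ : -1/2 < β) (δ : ℝ)
    (hδ : 0 < δ) (n : ℕ) (t : ℝ) (ht : t ∈ Set.Ioc (0:ℝ) π) :
    FJ n α (β + 1) δ t =
      ((n : ℝ) + β + 1/2) / (2 * (n : ℝ) + α + β + 1) * FJ n α β δ t +
      ((n : ℝ) + 1) / (2 * (n : ℝ) + α + β + 1) * FJ (n + 1) α β δ t :=
  FJ_beta_recurrence_general hα hβ n <|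
    intervalIntegrable_sub_rpow_mul_sin_half_rpow_mul_cos_half_rpow
      (by linarith) (by linarith) hδ.le (Ioc_subset_Icc_self ht)
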